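/- If Γ ⊢ s∘q ▷ Δ is derivable and both s and q have one of the four shapes (i) id, (ii) an iterated composition (…((π_{a₁}∘π_{a₂})∘…)∘π_{a_n}) with n ≥ 1, (iii) ⟨id, N₁\b₁, …, N_k\b_k⟩ with k ≥ 1, or (iv) ⟨(…((π_{a₁}∘π_{a₂})∘…)∘π_{a_n}), N₁\b₁, …, N_k\b_k⟩ with n,k ≥ 1, then s∘q σπα-reduces (in zero or more steps of the one-step σπα-reduction on substitutions) to a substitution of one of the shapes (i)–(iv). -/

import Mathlib

/- Named terms and substitutions of the λπ-calculus. Variables are natural numbers. -/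
mutual
inductive Tm : Type
  | var : ℕ → Tm
  | app : Tm → Tm → Tm
  | lam : ℕ → Tm → Tm
  | clos : Subst → Tm → Tm
inductive Subst : Type
  | id : Subst
  | pi : ℕ → Subst
  | cons : Subst → Tm → ℕ → Subst
  | comp : Subst → Subst → Subst
end

/- Contexts are lists of variables; the head of the list is the *rightmost* variable,
so the context `Γ, a` of the paper is `a :: Γ`. -/
mutual
/-- `WfTm Γ M` is the judgement `Γ ⊢ M`. -/
inductive WfTm : List ℕ → Tm → Prop
  | var (Γ : List ℕ) (a : ℕ) : WfTm (a :: Γ) (.var a)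
  | weak {Γ : List ℕ} {a : ℕ} (b : ℕ) : a ≠ b → WfTm Γ (.var a) → WfTm (b :: Γ) (.var a)
  | app {Γ M N} : WfTm Γ M → WfTm Γ N → WfTm Γ (.app M N)
  | lam {Γ a M} : WfTm (a :: Γ) M → WfTm Γ (.lam a M)
  | clos {Γ s Δ M} : WfSub Γ s Δ → WfTm Δ M → WfTm Γ (.clos s M)
/-- `WfSub Γ s Δ` is the judgement `Γ ⊢ s ▷ Δ`. -/
inductive WfSub : List ℕ → Subst → List ℕ → Prop
  | id (Γ) : WfSub Γ .id Γ
  | pi (Γ a) : WfSub (a :: Γ) (.pi a) Γ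
  | cons {Γ s Δ N} (a) : WfSub Γ s Δ → WfTm Γ N → WfSub Γ (.cons s N a) (a :: Δ)
  | comp {Γ s Δ q Θ} : WfSub Γ s Δ → WfSub Δ q Θ → WfSub Γ (.comp s q) Θ
end

/-- The operator `O_{λa}` on sequences of finite sets (sequences are 0-indexed:
index `n` corresponds to the paper's index `n+1`). -/
def Olam (a : ℕ) (A : ℕ → Finset ℕ) : ℕ → Finset ℕ
  | 0 => (A 0).erase a ∪ A 1
  | n + 1 => A (n + 2)

/-- The operator `O_π`. -/
def Opi (A : ℕ → Finset ℕ) : ℕ → Finset ℕ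
  | 0 => ∅
  | n + 1 => A n

mutual
/-- The free-variable sequence of a term: `FV M n` is the paper's `FV_{n+1}(M)`. -/
def FV : Tm → ℕ → Finset ℕ
  | .var a => fun n => if n = 0 then {a} else ∅
  | .app M N => fun n => FV M n ∪ FV N n
  | .lam a M => Olam a (FV M)
  | .clos s M => Osub s (FV M)
/-- The operator `O_s` associated with a substitution `s`. -/
def Osub : Subst → (ℕ → Finset ℕ) → (ℕ → Finset ℕ)
  | .id => fun A => A
  | .pi _ => fun A => Opi A
  | .cons s N a => fun A n => Osub s (Olam a A) n ∪ FV N n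
  | .comp s q => fun A => Osub s (Osub q A)
end

/-- Iterated abstraction `λΓ.M` (recall the head of the list is the rightmost variable). -/
def lamCtx : List ℕ → Tm → Tm
  | [], M => M
  | a :: Γ, M => lamCtx Γ (.lam a M)

/-- Free variables of a judgement: `FV(Γ ⊢ M) = FV(λΓ.M)`. -/
def FVJ (Γ : List ℕ) (M : Tm) : ℕ → Finset ℕ := FV (lamCtx Γ M)

/-- Iterated lifting `⇑_Δ(s)`. -/
def Uparrow : List ℕ → Subst → Subst
  | [], s => s
  | a :: Δ, s => .cons (.comp (.pi a) (Uparrow Δ s)) (.var a) a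

/- One-step reduction of the λπ-calculus (compatible closure).  The Boolean
parameter tells whether the rule `Beta` is allowed: `StepTm true` is λπ-reduction,
`StepTm false` is σπα-reduction. -/
mutual
inductive StepTm : Bool → Tm → Tm → Prop
  | beta {a : ℕ} {M N : Tm} :
      StepTm true (.app (.lam a M) N) (.clos (.cons .id N a) M)
  | abs {β : Bool} {s : Subst} {a : ℕ} {M : Tm} :
      StepTm β (.clos s (.lam a M))
        (.lam a (.clos (.cons (.comp (.pi a) s) (.var a) a) M))
  | app {β : Bool} {s : Subst} {M N : Tm} :
      StepTm β (.clos s (.app M N)) (.app (.clos s M) (.clos s N))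
  | consVar {β : Bool} {s : Subst} {N : Tm} {a : ℕ} :
      StepTm β (.clos (.cons s N a) (.var a)) N
  | new {β : Bool} {s : Subst} {N : Tm} {a b : ℕ} : a ≠ b →
      StepTm β (.clos (.cons s N a) (.var b)) (.clos s (.var b))
  | idVar {β : Bool} {a : ℕ} : StepTm β (.clos .id (.var a)) (.var a)
  | clos {β : Bool} {s q : Subst} {M : Tm} :
      StepTm β (.clos s (.clos q M)) (.clos (.comp s q) M)
  | pi1 {β : Bool} {a b : ℕ} : a ≠ b → StepTm β (.clos (.pi a) (.var b)) (.var b)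
  | pi2 {β : Bool} {s : Subst} {a b : ℕ} : a ≠ b →
      StepTm β (.clos (.comp s (.pi a)) (.var b)) (.clos s (.var b))
  | alpha1 {β : Bool} {a b : ℕ} {M : Tm} :
      (∃ i, a ∈ FV (.lam a M) i) → (∀ i, b ∉ FV (.lam a M) i) →
      StepTm β (.lam a M) (.lam b (.clos (.cons (.pi b) (.var b) a) M))
  | lamCong {β : Bool} {a : ℕ} {M₁ M₂ : Tm} :
      StepTm β M₁ M₂ → StepTm β (.lam a M₁) (.lam a M₂)
  | appL {β : Bool} {M₁ M₂ N : Tm} : StepTm β M₁ M₂ → StepTm β (.app M₁ N) (.app M₂ N)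
  | appR {β : Bool} {M N₁ N₂ : Tm} : StepTm β N₁ N₂ → StepTm β (.app M N₁) (.app M N₂)
  | closL {β : Bool} {s₁ s₂ : Subst} {M : Tm} :
      StepSub β s₁ s₂ → StepTm β (.clos s₁ M) (.clos s₂ M)
  | closR {β : Bool} {s : Subst} {M₁ M₂ : Tm} :
      StepTm β M₁ M₂ → StepTm β (.clos s M₁) (.clos s M₂)
inductive StepSub : Bool → Subst → Subst → Prop
  | ass {β : Bool} {s q r : Subst} :
      StepSub β (.comp s (.comp q r)) (.comp (.comp s q) r)
  | idR {β : Bool} {s : Subst} : StepSub β (.comp s .id) s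
  | idShift {β : Bool} {a : ℕ} : StepSub β (.comp .id (.pi a)) (.pi a)
  | consShift {β : Bool} {s : Subst} {N : Tm} {a : ℕ} :
      StepSub β (.comp (.cons s N a) (.pi a)) s
  | map {β : Bool} {s q : Subst} {N : Tm} {a : ℕ} :
      StepSub β (.comp s (.cons q N a)) (.cons (.comp s q) (.clos s N) a)
  | consL {β : Bool} {s₁ s₂ : Subst} {N : Tm} {a : ℕ} :
      StepSub β s₁ s₂ → StepSub β (.cons s₁ N a) (.cons s₂ N a)
  | consR {β : Bool} {s : Subst} {N₁ N₂ : Tm} {a : ℕ} :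
      StepTm β N₁ N₂ → StepSub β (.cons s N₁ a) (.cons s N₂ a)
  | compL {β : Bool} {s₁ s₂ q : Subst} :
      StepSub β s₁ s₂ → StepSub β (.comp s₁ q) (.comp s₂ q)
  | compR {β : Bool} {s q₁ q₂ : Subst} :
      StepSub β q₁ q₂ → StepSub β (.comp s q₁) (.comp s q₂)
end

/-- One-step reduction `⇝` on judgements `Γ ⊢ M`, including the rule `α₂`.
`StepJ true` is λπ, `StepJ false` is σπα. -/
inductive StepJ (β : Bool) : List ℕ × Tm → List ℕ × Tm → Prop
  | step {Γ : List ℕ} {M₁ M₂ : Tm} : StepTm β M₁ M₂ → StepJ β (Γ, M₁) (Γ, M₂)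
  | alpha2 {Γ Δ : List ℕ} {a b : ℕ} {M : Tm} :
      (∃ i, a ∈ FVJ (Δ ++ [a]) M i) → (∀ i, b ∉ FVJ (Δ ++ [a]) M i) →
      StepJ β (Δ ++ a :: Γ, M)
        (Δ ++ b :: Γ, .clos (Uparrow Δ (.cons (.pi b) (.var b) a)) M)

/- Name-free (de Bruijn) terms and substitutions. -/
mutual
inductive NTm : Type
  | one : NTm
  | app : NTm → NTm → NTm
  | lam : NTm → NTm
  | clos : NSub → NTm → NTm
inductive NSub : Type
  | id : NSub
  | pi : NSub
  | cons : NSub → NTm → NSub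
  | comp : NSub → NSub → NSub
end

/-- `piIter n` is the left-nested composition of `n+1` copies of `π`. -/
def piIter : ℕ → NSub
  | 0 => .pi
  | k + 1 => .comp (piIter k) .pi

/-- `dbr n` is the de Bruijn index `n+1̲`: `dbr 0 = 1` and
`dbr (n+1) = ((…(π∘π)∘…)∘π)∘1` with `n+1` occurrences of `π`. -/
def dbr : ℕ → NTm
  | 0 => .one
  | n + 1 => .clos (piIter n) .one

/- One-step reduction of λσ (`NStepTm true`) resp. σ (`NStepTm false`)
on name-free terms/substitutions. -/
mutual
inductive NStepTm : Bool → NTm → NTm → Prop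
  | beta {U V : NTm} : NStepTm true (.app (.lam U) V) (.clos (.cons .id V) U)
  | abs {β : Bool} {u : NSub} {U : NTm} :
      NStepTm β (.clos u (.lam U)) (.lam (.clos (.cons (.comp .pi u) .one) U))
  | app {β : Bool} {u : NSub} {U V : NTm} :
      NStepTm β (.clos u (.app U V)) (.app (.clos u U) (.clos u V))
  | consVar {β : Bool} {u : NSub} {V : NTm} : NStepTm β (.clos (.cons u V) .one) V
  | idVar {β : Bool} : NStepTm β (.clos .id .one) .one
  | clos {β : Bool} {u v : NSub} {U : NTm} :
      NStepTm β (.clos u (.clos v U)) (.clos (.comp u v) U)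
  | lamCong {β : Bool} {U₁ U₂ : NTm} : NStepTm β U₁ U₂ → NStepTm β (.lam U₁) (.lam U₂)
  | appL {β : Bool} {U₁ U₂ V : NTm} : NStepTm β U₁ U₂ → NStepTm β (.app U₁ V) (.app U₂ V)
  | appR {β : Bool} {U V₁ V₂ : NTm} : NStepTm β V₁ V₂ → NStepTm β (.app U V₁) (.app U V₂)
  | closL {β : Bool} {u₁ u₂ : NSub} {U : NTm} :
      NStepSub β u₁ u₂ → NStepTm β (.clos u₁ U) (.clos u₂ U)
  | closR {β : Bool} {u : NSub} {U₁ U₂ : NTm} :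
      NStepTm β U₁ U₂ → NStepTm β (.clos u U₁) (.clos u U₂)
inductive NStepSub : Bool → NSub → NSub → Prop
  | ass {β : Bool} {u v w : NSub} : NStepSub β (.comp u (.comp v w)) (.comp (.comp u v) w)
  | idR {β : Bool} {u : NSub} : NStepSub β (.comp u .id) u
  | idShift {β : Bool} : NStepSub β (.comp .id .pi) .pi
  | consShift {β : Bool} {u : NSub} {V : NTm} : NStepSub β (.comp (.cons u V) .pi) u
  | map {β : Bool} {u v : NSub} {V : NTm} :
      NStepSub β (.comp u (.cons v V)) (.cons (.comp u v) (.clos u V))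
  | consL {β : Bool} {u₁ u₂ : NSub} {V : NTm} :
      NStepSub β u₁ u₂ → NStepSub β (.cons u₁ V) (.cons u₂ V)
  | consR {β : Bool} {u : NSub} {V₁ V₂ : NTm} :
      NStepTm β V₁ V₂ → NStepSub β (.cons u V₁) (.cons u V₂)
  | compL {β : Bool} {u₁ u₂ v : NSub} :
      NStepSub β u₁ u₂ → NStepSub β (.comp u₁ v) (.comp u₂ v)
  | compR {β : Bool} {u v₁ v₂ : NSub} :
      NStepSub β v₁ v₂ → NStepSub β (.comp u v₁) (.comp u v₂)
end

/- The correspondence `(Γ ⊢ M) ⟹ U` resp. `(Γ ⊢ s ▷ Δ) ⟹ u` between judgements and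
name-free terms/substitutions (Definition 7.6 of the paper). -/
mutual
inductive TrTm : List ℕ → Tm → NTm → Prop
  | var (Γ : List ℕ) (a : ℕ) : TrTm (a :: Γ) (.var a) (dbr 0)
  | weak {Γ : List ℕ} {a : ℕ} {n : ℕ} (b : ℕ) : a ≠ b →
      TrTm Γ (.var a) (dbr n) → TrTm (b :: Γ) (.var a) (dbr (n + 1))
  | app {Γ M N U V} : TrTm Γ M U → TrTm Γ N V → TrTm Γ (.app M N) (.app U V)
  | lam {Γ a M U} : TrTm (a :: Γ) M U → TrTm Γ (.lam a M) (.lam U)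
  | clos {Γ s Δ M u U} : TrSub Γ s Δ u → TrTm Δ M U → TrTm Γ (.clos s M) (.clos u U)
inductive TrSub : List ℕ → Subst → List ℕ → NSub → Prop
  | id (Γ) : TrSub Γ .id Γ .id
  | pi (Γ a) : TrSub (a :: Γ) (.pi a) Γ .pi
  | cons {Γ s Δ N u V} (a) : TrSub Γ s Δ u → TrTm Γ N V →
      TrSub Γ (.cons s N a) (a :: Δ) (.cons u V)
  | comp {Γ s Δ q Θ u v} : TrSub Γ s Δ u → TrSub Δ q Θ v →
      TrSub Γ (.comp s q) Θ (.comp u v)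
end

/-- Left-nested compositions `(…((π_{a₁}∘π_{a₂})∘…)∘π_{a_n}` with `n ≥ 1`. -/
inductive IsPiComp : Subst → Prop
  | single (a : ℕ) : IsPiComp (.pi a)
  | comp {s : Subst} (a : ℕ) : IsPiComp s → IsPiComp (.comp s (.pi a))

/-- Substitutions of the form `⟨r, N₁\b₁, …, N_k\b_k⟩` with `k ≥ 1`, where `r` is `id`
or a left-nested composition of `π`'s. -/
inductive IsConsChain : Subst → Prop
  | base {s : Subst} {N : Tm} {b : ℕ} : (s = Subst.id ∨ IsPiComp s) →
      IsConsChain (.cons s N b)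
  | cons {s : Subst} {N : Tm} {b : ℕ} : IsConsChain s → IsConsChain (.cons s N b)

/-- The four shapes (i)–(iv) of σπα-normal substitutions. -/
def NFShape (s : Subst) : Prop := s = Subst.id ∨ IsPiComp s ∨ IsConsChain s

/-- A term is pure iff it contains no subterm of the shape `s∘N`. -/
def PureTm : Tm → Prop
  | .var _ => True
  | .app M N => PureTm M ∧ PureTm N
  | .lam _ M => PureTm M
  | .clos _ _ => False

/-- `PiChainEnd s b`: `s` is a left-nested composition of `π`'s whose rightmost factor
is `π_b`, i.e. `s = ((…(π_{a₁}∘…)∘π_{a_m})∘π_b` with `m ≥ 0`. -/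
inductive PiChainEnd : Subst → ℕ → Prop
  | single (b : ℕ) : PiChainEnd (.pi b) b
  | comp {s : Subst} (b : ℕ) : IsPiComp s → PiChainEnd (.comp s (.pi b)) b

/-- Terms constructed from variables and blocks `((…((π_{a₁}∘π_{a₂})∘…)∘π_b)∘b`
(with `m ≥ 0` factors before `π_b`) using application and abstraction only. -/
inductive FromBlocks : Tm → Prop
  | var (a : ℕ) : FromBlocks (.var a)
  | block {s : Subst} {b : ℕ} : PiChainEnd s b → FromBlocks (.clos s (.var b))
  | app {M N : Tm} : FromBlocks M → FromBlocks N → FromBlocks (.app M N)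
  | lam {M : Tm} (a : ℕ) : FromBlocks M → FromBlocks (.lam a M)

/- The compatible closure of the single rule α₁ on terms and substitutions. -/
mutual
inductive A1Tm : Tm → Tm → Prop
  | alpha1 {a b : ℕ} {M : Tm} :
      (∃ i, a ∈ FV (.lam a M) i) → (∀ i, b ∉ FV (.lam a M) i) →
      A1Tm (.lam a M) (.lam b (.clos (.cons (.pi b) (.var b) a) M))
  | lamCong {a : ℕ} {M₁ M₂ : Tm} : A1Tm M₁ M₂ → A1Tm (.lam a M₁) (.lam a M₂)
  | appL {M₁ M₂ N : Tm} : A1Tm M₁ M₂ → A1Tm (.app M₁ N) (.app M₂ N)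
  | appR {M N₁ N₂ : Tm} : A1Tm N₁ N₂ → A1Tm (.app M N₁) (.app M N₂)
  | closL {s₁ s₂ : Subst} {M : Tm} : A1Sub s₁ s₂ → A1Tm (.clos s₁ M) (.clos s₂ M)
  | closR {s : Subst} {M₁ M₂ : Tm} : A1Tm M₁ M₂ → A1Tm (.clos s M₁) (.clos s M₂)
inductive A1Sub : Subst → Subst → Prop
  | consL {s₁ s₂ : Subst} {N : Tm} {a : ℕ} : A1Sub s₁ s₂ → A1Sub (.cons s₁ N a) (.cons s₂ N a)
  | consR {s : Subst} {N₁ N₂ : Tm} {a : ℕ} : A1Tm N₁ N₂ → A1Sub (.cons s N₁ a) (.cons s N₂ a)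
  | compL {s₁ s₂ q : Subst} : A1Sub s₁ s₂ → A1Sub (.comp s₁ q) (.comp s₂ q)
  | compR {s q₁ q₂ : Subst} : A1Sub q₁ q₂ → A1Sub (.comp s q₁) (.comp s q₂)
end

/-
Well-typedness rules out the one stuck composition, `⟨s, N\b⟩∘π_a` with `a ≠ b`, so a substitution
of one of the four shapes composed with a single `π_a` reduces to one of the four shapes. Structural
induction on `q`, pushing compositions to the left with (Ass) and extensions outwards with (Map),
then handles `s∘q` for `s` of one of the shapes and any well-typed `q`. For an arbitrary
composition, first reduce its left factor to one of the shapes.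
-/

open Relation (ReflTransGen)

theorem NFShape.pi (a : ℕ) : NFShape (.pi a) :=
  .inr (.inl (.single a))

theorem NFShape.cons_iff {s : Subst} {N : Tm} {b : ℕ} :
    NFShape (.cons s N b) ↔ NFShape s where
  mp
    | .inr (.inr (.base (.inl hs))) => .inl hs
    | .inr (.inr (.base (.inr hs))) => .inr (.inl hs)
    | .inr (.inr (.cons hs)) => .inr (.inr hs)
  mpr
    | .inl hs => .inr (.inr (.base (.inl hs)))
    | .inr (.inl hs) => .inr (.inr (.base (.inr hs)))
    | .inr (.inr hs) => .inr (.inr (.cons hs))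

section Reduction

variable {β : Bool} {s s' : Subst}

theorem StepSub.reflTransGen_cons_left (N : Tm) (b : ℕ) (h : ReflTransGen (StepSub β) s s') :
    ReflTransGen (StepSub β) (.cons s N b) (.cons s' N b) :=
  ReflTransGen.lift (Subst.cons · N b) (fun _ _ => StepSub.consL) _ _ h

theorem StepSub.reflTransGen_comp_left (q : Subst) (h : ReflTransGen (StepSub β) s s') :
    ReflTransGen (StepSub β) (.comp s q) (.comp s' q) :=
  ReflTransGen.lift (Subst.comp · q) (fun _ _ => StepSub.compL) _ _ h

end Reduction

section Shapes

variable {β : Bool} {Γ : List ℕ}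

theorem NFShape.exists_comp_pi_reduces {Δ : List ℕ} {s : Subst} {a : ℕ}
    (hs : NFShape s) (h : WfSub Γ s (a :: Δ)) :
    ∃ r, ReflTransGen (StepSub β) (.comp s (.pi a)) r ∧ NFShape r ∧ WfSub Γ r Δ := by
  cases h with
  | id => exact ⟨.pi a, .single .idShift, .pi a, .pi Δ a⟩
  | cons _ hs' _ => exact ⟨_, .single .consShift, NFShape.cons_iff.mp hs, hs'⟩
  | pi Δ b => exact ⟨_, .refl, .inr (.inl (.comp a (.single b))), .comp (.pi _ _) (.pi _ _)⟩
  | comp h₁ h₂ =>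
    match hs with
    | .inr (.inl hs) =>
      exact ⟨_, .refl, .inr (.inl (.comp a hs)), .comp (.comp h₁ h₂) (.pi Δ a)⟩

theorem NFShape.exists_comp_reduces :
    ∀ {q s : Subst} {Δ Θ : List ℕ}, NFShape s → WfSub Γ s Δ → WfSub Δ q Θ →
      ∃ r, ReflTransGen (StepSub β) (.comp s q) r ∧ NFShape r ∧ WfSub Γ r Θ
  | .id, s, _, _, hs, h, .id _ => ⟨s, .single .idR, hs, h⟩
  | .pi _, _, _, _, hs, h, .pi _ _ => hs.exists_comp_pi_reduces h
  | .cons _ N b, s, _, _, hs, h, .cons _ hq hN =>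
    have ⟨r, hred, hr, hΓr⟩ := hs.exists_comp_reduces h hq
    ⟨.cons r (.clos s N) b, .head .map (StepSub.reflTransGen_cons_left _ b hred),
      NFShape.cons_iff.mpr hr, .cons b hΓr (.clos h hN)⟩
  | .comp _ q₂, _, _, _, hs, h, .comp hq₁ hq₂ =>
    have ⟨_, hred₁, hr₁, hΓr₁⟩ := hs.exists_comp_reduces h hq₁
    have ⟨r, hred, hr, hΓr⟩ := hr₁.exists_comp_reduces hΓr₁ hq₂
    ⟨r, .head .ass ((StepSub.reflTransGen_comp_left q₂ hred₁).trans hred), hr, hΓr⟩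

theorem comp_of_shapes_reduces_general :
    ∀ {s : Subst} {Δ : List ℕ}, WfSub Γ s Δ →
      ∃ r, ReflTransGen (StepSub β) s r ∧ NFShape r ∧ WfSub Γ r Δ
  | .id, _, h => ⟨.id, .refl, .inl rfl, h⟩
  | .pi a, _, h => ⟨.pi a, .refl, .pi a, h⟩
  | .cons _ N b, _, .cons _ hs hN =>
    have ⟨r, hred, hr, hΓr⟩ := comp_of_shapes_reduces_general hs
    ⟨.cons r N b, StepSub.reflTransGen_cons_left N b hred, NFShape.cons_iff.mpr hr, .cons b hΓr hN⟩
  | .comp _ q, _, .comp hs hq =>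
    have ⟨_, hred₁, hr₁, hΓr₁⟩ := comp_of_shapes_reduces_general hs
    have ⟨r, hred, hr, hΓr⟩ := hr₁.exists_comp_reduces hΓr₁ hq
    ⟨r, (StepSub.reflTransGen_comp_left q hred₁).trans hred, hr, hΓr⟩

end Shapes

/-- the composition of two substitutions of the shapes (i)–(iv)
σπα-reduces to a substitution of one of the shapes (i)–(iv). -/
theorem comp_of_shapes_reduces {Γ Δ : List ℕ} {s q : Subst}
    (h : WfSub Γ (.comp s q) Δ) (hs : NFShape s) (hq : NFShape q) :
    ∃ r : Subst, Relation.ReflTransGen (StepSub false) (.comp s q) r ∧ NFShape r := by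
  obtain ⟨r, hred, hr, -⟩ := comp_of_shapes_reduces_general h
  exact ⟨r, hred, hr⟩
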